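/- There exists a non-singular n(n−1)/2 × n(n−1)/2 matrix V over ℤ[t^{±1}, q^{±1}] such that for every n-braid β, K(β^rev) V = V K(β)^T, where β^rev is the braid obtained by reversing the order of the Artin generators in any word representing β. -/

import Mathlib

open Matrix

noncomputable section

/-- Braid relations among the Artin generators `σ_1, …, σ_{n-1}`
(indexed here by `Fin (n-1)`, with `i : Fin (n-1)` standing for `σ_{i+1}`). -/
def braidRels (n : ℕ) : Set (FreeGroup (Fin (n - 1))) :=
  {r | (∃ i j : Fin (n - 1), (i : ℕ) + 1 = (j : ℕ) ∧
          r = .of i * .of j * .of i * (.of j * .of i * .of j)⁻¹) ∨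
       (∃ i j : Fin (n - 1), (i : ℕ) + 2 ≤ (j : ℕ) ∧
          r = .of i * .of j * (.of j * .of i)⁻¹)}

/-- The braid group `B_n` as a presented group. -/
abbrev Braid (n : ℕ) := PresentedGroup (braidRels n)

/-- The Artin generator `σ_{i+1}` of `B_n`. -/
def σg {n : ℕ} (i : Fin (n - 1)) : Braid n := PresentedGroup.of i

/-- Index set `{(i,j) : 1 ≤ i < j ≤ n}` for the Lawrence–Krammer basis `X_{i,j}`. -/
abbrev BP (n : ℕ) := {p : Fin (n + 1) × Fin (n + 1) // 0 < (p.1 : ℕ) ∧ (p.1 : ℕ) < (p.2 : ℕ)}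

/-- The standard basis row vector `X_{a,b}`. -/
def ee {R : Type*} [CommRing R] (n a b : ℕ) : BP n → R :=
  fun c => if (c.val.1 : ℕ) = a ∧ (c.val.2 : ℕ) = b then 1 else 0

/-- The Lawrence–Krammer matrix of the Artin generator `σ_m` (1-based `m`),
with parameters `t`, `q`; row `(i,j)` is the expansion of `X_{i,j}·σ_m` in the basis. -/
def LKgen {R : Type*} [CommRing R] (t q : R) (n m : ℕ) : Matrix (BP n) (BP n) R :=
  fun r c =>
    let i := (r.val.1 : ℕ); let j := (r.val.2 : ℕ)
    if m = i ∧ j = i + 1 then -(t * q ^ 2) * ee n i j c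
    else if m = i then
      q * ee n (i + 1) j c + (1 - q) * ee n i j c + t * q * (1 - q) * ee n i (i + 1) c
    else if m = j then
      q * ee n i (j + 1) c + (1 - q) * ee n i j c - q * (1 - q) * ee n j (j + 1) c
    else if m + 1 = i then ee n (i - 1) j c
    else if m + 1 = j then ee n i (j - 1) c
    else ee n i j c

/-- The field `ℚ(t,q)` of rational functions in two variables. -/
abbrev F2 := FractionRing (MvPolynomial (Fin 2) ℚ)

/-- The variable `t` in `ℚ(t,q)`. -/
def tt : F2 := algebraMap (MvPolynomial (Fin 2) ℚ) F2 (MvPolynomial.X 0)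

/-- The variable `q` in `ℚ(t,q)`. -/
def qq : F2 := algebraMap (MvPolynomial (Fin 2) ℚ) F2 (MvPolynomial.X 1)

/-!
On the strands, let `b` be the Burau matrix of `σ_m`, and let `A` send `X_{i,j}` to
`e_j - t e_i`. Write `w = X_{m,m+1}`, let `a` be the column of `A` at `m`, and put
`c = (1 + t q) (t - 1)`. Then

* `K(σ_m) = (b ⊗ b)|_{i < j} + (q (q - 1) a - t q w) wᵀ`, and
* `K(σ_m) A = A S + c w e_mᵀ` for a rank-one deformation `S` of `b`.

With the strand weights `Q_a = q ^ (n - a)`, both `b diag(Q)` and `S diag(Q²)` are symmetric.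
Hence `V = (q - 1) A diag(Q²) Aᵀ + c diag(Q_i Q_j)` makes `K(σ_m) V` symmetric: the two asymmetric
terms that remain, multiples of `w aᵀ` and `a wᵀ`, have the same coefficient. As `V` is itself
symmetric, this says `K(σ_m) V = V K(σ_m)ᵀ`, and the relation passes from generators to all braids.
At `q = 1` the matrix `V` is the scalar `(1 + t) (t - 1)`, so its determinant is not zero.
-/

open scoped Kronecker

section Reversal

theorem semiconjBy_map_of_closure_eq_top {G M : Type*} [Group G] [Monoid M] {S : Set G}
    (hS : Subgroup.closure S = ⊤) (f g : G →* M) {a : M}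
    (h : ∀ s ∈ S, SemiconjBy a (f s) (g s)) (x : G) : SemiconjBy a (f x) (g x) := by
  induction (hS ▸ Subgroup.mem_top x : x ∈ Subgroup.closure S) using
    Subgroup.closure_induction with
  | mem s hs => exact h s hs
  | one => simp
  | mul x y _ _ hx hy => simpa only [map_mul] using hx.mul_right hy
  | inv x _ hx =>
    exact SemiconjBy.units_inv_right (x := f.toHomUnits x) (y := g.toHomUnits x) hx

theorem map_rev_mul_eq_mul_transpose {G ι R : Type*} [Group G] [Fintype ι] [DecidableEq ι]
    [CommSemiring R] {S : Set G} (hS : Subgroup.closure S = ⊤) (rev : G →* Gᵐᵒᵖ)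
    (hrev : ∀ s ∈ S, rev s = MulOpposite.op s) (ρ : G →* Matrix ι ι R) {V : Matrix ι ι R}
    (hV : ∀ s ∈ S, ρ s * V = V * (ρ s)ᵀ) (x : G) : ρ (rev x).unop * V = V * (ρ x)ᵀ := by
  let ρrev : G →* (Matrix ι ι R)ᵐᵒᵖ := (MonoidHom.op ρ).comp rev
  let ρT : G →* (Matrix ι ι R)ᵐᵒᵖ := (transposeRingEquiv ι R).toMonoidHom.comp ρ
  have intertwine_iff (y : G) :
      SemiconjBy (MulOpposite.op V) (ρrev y) (ρT y) ↔ ρ (rev y).unop * V = V * (ρ y)ᵀ := by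
    simp [ρrev, ρT, SemiconjBy, ← MulOpposite.op_mul]
  refine (intertwine_iff x).1 (semiconjBy_map_of_closure_eq_top hS ρrev ρT (fun s hs => ?_) x)
  rw [intertwine_iff, hrev s hs]
  exact hV s hs

end Reversal

section Matrices

theorem single_one_vecMul_diagonal {ι R : Type*} [Fintype ι] [DecidableEq ι]
    [Semiring R] (w : ι → R) (a : ι) :
    Pi.single a 1 ᵥ* diagonal w = w a • Pi.single a 1 := by
  rw [single_vecMul_diagonal, one_mul, ← Pi.single_smul, smul_eq_mul, mul_one]

theorem isSymm_mul_mul_transpose {ι κ R : Type*} [Fintype κ] [CommSemiring R]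
    {N : Matrix κ κ R} (hN : N.IsSymm) (A : Matrix ι κ R) : (A * N * Aᵀ).IsSymm := by
  rw [IsSymm, transpose_mul, transpose_mul, transpose_transpose, hN.eq, Matrix.mul_assoc]

end Matrices

section Strands

variable {ι R : Type*} [DecidableEq ι] [CommRing R] (t q : R) (a b : ι)

/-- The vector `e_b - t e_a`, the image of the Lawrence–Krammer basis vector `X_{a,b}` in the
free module on the strands. -/
def edge : ι → R := Pi.single b 1 - t • Pi.single a 1

variable (ι) in
/-- The matrix whose row `(a, b)` is `edge t a b`. -/
def endpoints : Matrix (ι × ι) ι R := of fun p => edge t p.1 p.2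

/-- The Burau matrix of the crossing of strands `a` and `b`, acting on rows by
`e_a ↦ (1 - q) e_a + q e_b` and `e_b ↦ e_a`. -/
def burau : Matrix ι ι R := 1 - vecMulVec (edge q a b) (edge 1 a b)

variable {a b} in
theorem burau_apply (hab : a ≠ b) (i j : ι) : burau q a b i j =
    if i = a then (if j = a then 1 - q else if j = b then q else 0)
    else if i = b then (if j = a then 1 else 0)
    else if i = j then 1 else 0 := by
  simp only [burau, edge, Matrix.sub_apply, one_apply, vecMulVec_apply, Pi.sub_apply,
    Pi.smul_apply, Pi.single_apply, smul_eq_mul]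
  split_ifs <;> grind

variable [Fintype ι]

theorem edge_vecMul {κ : Type*} (M : Matrix ι κ R) : edge t a b ᵥ* M = M b - t • M a := by
  ext x
  simp [edge, sub_vecMul, smul_vecMul]

variable {a b} in
theorem edge_vecMul_diagonal {w : ι → R} (hw : w a = q * w b) :
    edge t a b ᵥ* diagonal w = w b • edge (t * q) a b := by
  rw [edge, edge, sub_vecMul, smul_vecMul, single_one_vecMul_diagonal, single_one_vecMul_diagonal,
    hw]
  module

theorem kronecker_mul_endpoints {B : Matrix ι ι R} (hB : B *ᵥ 1 = 1) :
    (B ⊗ₖ B) * endpoints ι t = endpoints ι t * B := by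
  have row_sum (i : ι) : ∑ k, B i k = 1 := by simpa [mulVec, dotProduct] using congrFun hB i
  have row_apply (i x : ι) : ∑ k, B i k * (Pi.single k (1 : R) : ι → R) x = B i x := by
    simp [Pi.single_apply]
  ext ⟨i, j⟩ x
  have expand (k l : ι) : B i k * B j l * edge t k l x =
      B i k * (B j l * (Pi.single l (1 : R) : ι → R) x) -
        t * (B i k * (Pi.single k (1 : R) : ι → R) x * B j l) := by
    simp only [edge, Pi.sub_apply, Pi.smul_apply, smul_eq_mul]
    ring
  calc ((B ⊗ₖ B) * endpoints ι t) (i, j) x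
      = ∑ k, ∑ l, B i k * B j l * edge t k l x := by
        simp [Matrix.mul_apply, endpoints, Fintype.sum_prod_type]
    _ = B j x - t * B i x := by
        simp only [expand, Finset.sum_sub_distrib, ← Finset.mul_sum, ← Finset.sum_mul, row_sum,
          row_apply, one_mul, mul_one]
    _ = (endpoints ι t * B) (i, j) x := (congrFun (edge_vecMul t i j B) x).symm

theorem burau_mulVec_one : burau q a b *ᵥ 1 = 1 := by
  simp [burau, sub_mulVec, vecMulVec_mulVec, edge, sub_dotProduct]

variable {q a b} in
theorem isSymm_burau_mul_diagonal {w : ι → R} (hw : w a = q * w b) :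
    (burau q a b * diagonal w).IsSymm := by
  have rank_one_form : burau q a b * diagonal w =
      diagonal w - w b • vecMulVec (edge q a b) (edge q a b) := by
    rw [burau, Matrix.sub_mul, Matrix.one_mul, vecMulVec_mul, edge_vecMul_diagonal 1 q hw, one_mul,
      vecMulVec_smul]
  rw [rank_one_form]
  exact (isSymm_diagonal w).sub (IsSymm.smul (transpose_vecMulVec _ _) _)

/-- The action on the strands induced, up to a rank-one error, by a Lawrence–Krammer generator:
`e_a ↦ (1 - q) (1 + t q) e_a + q² e_b` and `e_b ↦ e_a`. -/
def deformedBurau : Matrix ι ι R :=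
  burau q a b + (q * (q - 1)) • vecMulVec (Pi.single a 1) (edge t a b)

variable {q a b} in
theorem isSymm_deformedBurau_mul_diagonal {w : ι → R} (hw : w a = q ^ 2 * w b) :
    (deformedBurau t q a b * diagonal w).IsSymm := by
  have rank_two_form : deformedBurau t q a b * diagonal w =
      diagonal w + w b • ((q * (q - 1)) • vecMulVec (Pi.single a 1) (edge (t * q ^ 2) a b) -
        vecMulVec (edge q a b) (edge (q ^ 2) a b)) := by
    rw [deformedBurau, burau, Matrix.add_mul, Matrix.sub_mul, Matrix.one_mul, Matrix.smul_mul,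
      vecMulVec_mul, vecMulVec_mul, edge_vecMul_diagonal 1 _ hw, edge_vecMul_diagonal t _ hw,
      one_mul, vecMulVec_smul, vecMulVec_smul]
    module
  rw [rank_two_form]
  refine (isSymm_diagonal w).add (IsSymm.smul (IsSymm.ext fun x y => ?_) _)
  simp only [edge, Matrix.sub_apply, Matrix.smul_apply, vecMulVec_apply, Pi.sub_apply,
    Pi.smul_apply, smul_eq_mul]
  ring

variable {a b} in
theorem edge_vecMul_burau (hab : a ≠ b) : edge t a b ᵥ* burau q a b =
    -((t * q) • edge t a b) - ((1 + t * q) * (t - 1)) • Pi.single a 1 := by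
  rw [edge_vecMul]
  ext x
  simp only [burau_apply q hab, edge, Pi.sub_apply, Pi.neg_apply, Pi.smul_apply,
    Pi.single_apply, smul_eq_mul]
  split_ifs <;> grind

end Strands

section Decomposition

variable {R : Type*} [CommRing R] (t q : R) {n : ℕ} {m : Fin n}

/-- The index `(m, m + 1)` of the basis vector `X_{m,m+1}`. -/
def adjacentPair (hm : 0 < (m : ℕ)) : BP n := ⟨(m.castSucc, m.succ), hm, m.castSucc_lt_succ⟩

theorem ee_eq_single_adjacentPair (hm : 0 < (m : ℕ)) :
    ee n m (m + 1) = Pi.single (adjacentPair hm) (1 : R) := by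
  ext c
  simp [ee, adjacentPair, Pi.single_apply, Subtype.ext_iff, Prod.ext_iff, Fin.ext_iff]

/-- The matrix of the linear map `X_{i,j} ↦ e_j - t e_i`. -/
def pairEndpoints (n : ℕ) : Matrix (BP n) (Fin (n + 1)) R :=
  (endpoints (Fin (n + 1)) t).submatrix Subtype.val id

variable (m) in
/-- The compression of the tensor square of the Burau matrix of `σ_m` to the span of the
`e_i ⊗ e_j` with `i < j`. -/
def burauSquare : Matrix (BP n) (BP n) R :=
  (burau q m.castSucc m.succ ⊗ₖ burau q m.castSucc m.succ).submatrix Subtype.val Subtype.val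

theorem LKgen_eq_burauSquare_add (hm : 0 < (m : ℕ)) : LKgen t q n m = burauSquare q m +
    vecMulVec ((q * (q - 1)) • (pairEndpoints t n).col m.castSucc -
      (t * q) • Pi.single (adjacentPair hm) 1) (Pi.single (adjacentPair hm) 1) := by
  rw [← ee_eq_single_adjacentPair hm]
  ext ⟨⟨i, j⟩, hi, hij⟩ ⟨⟨k, l⟩, hk, hkl⟩
  simp only [LKgen, burauSquare, pairEndpoints, endpoints, edge, ee, Matrix.add_apply,
    vecMulVec_apply, submatrix_apply, kronecker_apply, burau_apply q m.castSucc_lt_succ.ne,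
    Pi.sub_apply, Pi.smul_apply, col_apply, of_apply, id, Pi.single_apply, smul_eq_mul,
    Fin.ext_iff, Fin.val_castSucc, Fin.val_succ]
  grind

theorem burauSquare_adjacentPair (hm : 0 < (m : ℕ)) :
    burauSquare q m (adjacentPair hm) = 0 := by
  ext ⟨⟨k, l⟩, hk, hkl⟩
  simp only [burauSquare, adjacentPair, submatrix_apply, kronecker_apply,
    burau_apply q m.castSucc_lt_succ.ne, Fin.ext_iff, Fin.val_castSucc, Fin.val_succ,
    Pi.zero_apply]
  grind

theorem burau_kronecker_apply_eq_zero (hm : 0 < (m : ℕ)) {r : BP n} (hr : r ≠ adjacentPair hm)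
    {p : Fin (n + 1) × Fin (n + 1)} (hp : ¬(0 < (p.1 : ℕ) ∧ (p.1 : ℕ) < p.2)) :
    (burau q m.castSucc m.succ ⊗ₖ burau q m.castSucc m.succ) r p = 0 := by
  obtain ⟨⟨i, j⟩, hi, hij⟩ := r
  obtain ⟨k, l⟩ := p
  simp only [adjacentPair, ne_eq, Subtype.mk.injEq, Prod.mk.injEq, Fin.ext_iff, Fin.val_castSucc,
    Fin.val_succ] at hr
  simp only [kronecker_apply, burau_apply q m.castSucc_lt_succ.ne, Fin.ext_iff, Fin.val_castSucc,
    Fin.val_succ]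
  grind

theorem burauSquare_mul_submatrix_apply (hm : 0 < (m : ℕ)) {r : BP n} (hr : r ≠ adjacentPair hm)
    {κ : Type*} (M : Matrix (Fin (n + 1) × Fin (n + 1)) κ R) (x : κ) :
    (burauSquare q m * (M.submatrix Subtype.val id : Matrix (BP n) κ R)) r x =
      ((burau q m.castSucc m.succ ⊗ₖ burau q m.castSucc m.succ) * M) r x := by
  refine Fintype.sum_of_injective Subtype.val Subtype.val_injective _ _ (fun p hp => ?_)
    fun _ => rfl
  exact mul_eq_zero_of_left (burau_kronecker_apply_eq_zero q hm hr (by simpa using hp)) _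

theorem burauSquare_mul_pairEndpoints (hm : 0 < (m : ℕ)) :
    burauSquare q m * pairEndpoints t n = pairEndpoints t n * burau q m.castSucc m.succ -
      vecMulVec (Pi.single (adjacentPair hm) 1)
        (edge t m.castSucc m.succ ᵥ* burau q m.castSucc m.succ) := by
  ext r x
  rw [Matrix.sub_apply, vecMulVec_apply]
  obtain rfl | hr := eq_or_ne r (adjacentPair hm)
  · rw [Pi.single_eq_same, one_mul, mul_apply_eq_vecMul, burauSquare_adjacentPair, zero_vecMul]
    exact (sub_self _).symm
  · rw [Pi.single_eq_of_ne hr, zero_mul, sub_zero, pairEndpoints,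
      burauSquare_mul_submatrix_apply q hm hr, kronecker_mul_endpoints t (burau_mulVec_one q _ _)]
    rfl

theorem LKgen_mul_pairEndpoints (hm : 0 < (m : ℕ)) :
    LKgen t q n m * pairEndpoints t n =
      pairEndpoints t n * deformedBurau t q m.castSucc m.succ + ((1 + t * q) * (t - 1)) •
        vecMulVec (Pi.single (adjacentPair hm) 1) (Pi.single m.castSucc 1) := by
  have row_adjacent : (pairEndpoints t n).row (adjacentPair hm) = edge t m.castSucc m.succ := rfl
  rw [LKgen_eq_burauSquare_add t q hm, Matrix.add_mul, burauSquare_mul_pairEndpoints t q hm,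
    vecMulVec_mul, single_one_vecMul, row_adjacent, edge_vecMul_burau t q m.castSucc_lt_succ.ne,
    deformedBurau, Matrix.mul_add, Matrix.mul_smul, mul_vecMulVec, mulVec_single_one]
  simp only [sub_vecMulVec, vecMulVec_sub, vecMulVec_neg, smul_vecMulVec, vecMulVec_smul]
  module

end Decomposition

section Gram

variable {R : Type*} [CommRing R] (t q : R) {n : ℕ} {m : Fin n}

/-- The weight `q ^ (n - a)` of strand `a`, chosen so that each Burau matrix is symmetric with
respect to the corresponding diagonal form. -/
def strandWeight (n : ℕ) (a : Fin (n + 1)) : R := q ^ (n - a)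

variable (m) in
theorem strandWeight_castSucc :
    strandWeight q n m.castSucc = q * strandWeight q n m.succ := by
  rw [strandWeight, strandWeight, ← pow_succ', Fin.val_castSucc, Fin.val_succ]
  congr 1
  omega

/-- The weight of the basis vector `X_{i,j}` in the diagonal form on the Lawrence–Krammer module
induced from the one on the strands. -/
def pairWeight (n : ℕ) (p : BP n) : R := strandWeight q n p.1.1 * strandWeight q n p.1.2

/-- The Gram matrix of a symmetric form on the Lawrence–Krammer module for which every generator
is self-adjoint. -/
def lkGram (n : ℕ) : Matrix (BP n) (BP n) R :=
  (q - 1) • (pairEndpoints t n * diagonal (strandWeight q n ^ 2) * (pairEndpoints t n)ᵀ) +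
    ((1 + t * q) * (t - 1)) • diagonal (pairWeight q n)

theorem isSymm_lkGram (n : ℕ) : (lkGram t q n).IsSymm :=
  ((isSymm_mul_mul_transpose (isSymm_diagonal _) _).smul _).add ((isSymm_diagonal _).smul _)

variable (m) in
theorem isSymm_burauSquare_mul_diagonal :
    (burauSquare q m * diagonal (pairWeight q n)).IsSymm := by
  have symm := isSymm_burau_mul_diagonal (strandWeight_castSucc q m)
  refine IsSymm.ext fun ⟨⟨i, j⟩, _⟩ ⟨⟨k, l⟩, _⟩ => ?_
  have h₁ := symm.apply i k
  have h₂ := symm.apply j l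
  simp only [mul_diagonal] at h₁ h₂
  simp only [mul_diagonal, burauSquare, pairWeight, submatrix_apply, kronecker_apply]
  rw [mul_mul_mul_comm, h₁, h₂, mul_mul_mul_comm]

theorem LKgen_mul_lkGram (hm : 0 < (m : ℕ)) : LKgen t q n m * lkGram t q n =
    (q - 1) • (pairEndpoints t n *
      (deformedBurau t q m.castSucc m.succ * diagonal (strandWeight q n ^ 2)) *
        (pairEndpoints t n)ᵀ) +
    ((1 + t * q) * (t - 1)) • (burauSquare q m * diagonal (pairWeight q n) +
      ((q - 1) * strandWeight q n m.castSucc ^ 2) •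
        (vecMulVec (Pi.single (adjacentPair hm) 1) ((pairEndpoints t n).col m.castSucc) +
          vecMulVec ((pairEndpoints t n).col m.castSucc) (Pi.single (adjacentPair hm) 1)) -
      (t * q * pairWeight q n (adjacentPair hm)) •
        vecMulVec (Pi.single (adjacentPair hm) 1) (Pi.single (adjacentPair hm) 1)) := by
  have weight_sq : strandWeight q n m.castSucc ^ 2 = q * pairWeight q n (adjacentPair hm) := by
    rw [pairWeight, adjacentPair, mul_left_comm, ← strandWeight_castSucc, sq]
  have on_endpoints : LKgen t q n m *
      (pairEndpoints t n * diagonal (strandWeight q n ^ 2) * (pairEndpoints t n)ᵀ) =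
      pairEndpoints t n *
        (deformedBurau t q m.castSucc m.succ * diagonal (strandWeight q n ^ 2)) *
          (pairEndpoints t n)ᵀ +
      ((1 + t * q) * (t - 1) * strandWeight q n m.castSucc ^ 2) •
        vecMulVec (Pi.single (adjacentPair hm) 1) ((pairEndpoints t n).col m.castSucc) := by
    rw [← Matrix.mul_assoc, ← Matrix.mul_assoc, LKgen_mul_pairEndpoints t q hm, Matrix.add_mul,
      Matrix.add_mul, Matrix.smul_mul, Matrix.smul_mul, vecMulVec_mul, vecMulVec_mul,
      single_one_vecMul_diagonal, smul_vecMul, single_one_vecMul, row_transpose, vecMulVec_smul,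
      smul_smul, Pi.pow_apply, Matrix.mul_assoc (pairEndpoints t n)]
  have on_diagonal : LKgen t q n m * diagonal (pairWeight q n) =
      burauSquare q m * diagonal (pairWeight q n) + pairWeight q n (adjacentPair hm) •
        vecMulVec ((q * (q - 1)) • (pairEndpoints t n).col m.castSucc -
          (t * q) • Pi.single (adjacentPair hm) 1) (Pi.single (adjacentPair hm) 1) := by
    rw [LKgen_eq_burauSquare_add t q hm, Matrix.add_mul, vecMulVec_mul,
      single_one_vecMul_diagonal, vecMulVec_smul]
  rw [lkGram, Matrix.mul_add, Matrix.mul_smul, Matrix.mul_smul, on_endpoints, on_diagonal,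
    weight_sq]
  simp only [sub_vecMulVec, smul_vecMulVec]
  module

theorem isSymm_LKgen_mul_lkGram (hm : 0 < (m : ℕ)) : (LKgen t q n m * lkGram t q n).IsSymm := by
  have weight_sq : (strandWeight q n ^ 2) m.castSucc = q ^ 2 * (strandWeight q n ^ 2) m.succ := by
    rw [Pi.pow_apply, Pi.pow_apply, strandWeight_castSucc, mul_pow]
  rw [LKgen_mul_lkGram t q hm]
  refine ((isSymm_mul_mul_transpose (isSymm_deformedBurau_mul_diagonal t weight_sq) _).smul _).add
    ((((isSymm_burauSquare_mul_diagonal q m).add (IsSymm.smul ?_ _)).sub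
      (IsSymm.smul (transpose_vecMulVec _ _) _)).smul _)
  rw [IsSymm, transpose_add, transpose_vecMulVec, transpose_vecMulVec, add_comm]

theorem LKgen_mul_lkGram_eq_mul_transpose (hm : 0 < (m : ℕ)) :
    LKgen t q n m * lkGram t q n = lkGram t q n * (LKgen t q n m)ᵀ := by
  rw [← (isSymm_LKgen_mul_lkGram t q hm).eq, transpose_mul, (isSymm_lkGram t q n).eq]

end Gram

section Nonsingular

variable {R S : Type*} [CommRing R] [CommRing S]

theorem map_lkGram (f : R →+* S) (t q : R) (n : ℕ) :
    f.mapMatrix (lkGram t q n) = lkGram (f t) (f q) n := by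
  ext r c
  simp [lkGram, pairEndpoints, endpoints, edge, strandWeight, pairWeight, Matrix.mul_apply,
    diagonal_apply, Pi.single_apply, apply_ite f]

theorem lkGram_apply_mem {A : Subring R} {t q : R} (ht : t ∈ A) (hq : q ∈ A) {n : ℕ}
    (r c : BP n) : lkGram t q n r c ∈ A := by
  have h := map_lkGram A.subtype ⟨t, ht⟩ ⟨q, hq⟩ n
  exact congrFun₂ h r c ▸ Subtype.property _

theorem lkGram_one (t : R) (n : ℕ) :
    lkGram t 1 n = ((1 + t) * (t - 1)) • (1 : Matrix (BP n) (BP n) R) := by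
  have weight_one : pairWeight (1 : R) n = 1 := by
    ext
    simp [pairWeight, strandWeight]
  rw [lkGram, weight_one, Pi.one_def, diagonal_one, sub_self, zero_smul, zero_add, mul_one]

theorem det_lkGram_ne_zero {t q : R} (htq : AlgebraicIndependent ℤ ![t, q]) (n : ℕ) :
    (lkGram t q n).det ≠ 0 := by
  let P : MvPolynomial (Fin 2) ℤ := (lkGram (.X 0) (.X 1) n).det
  have aeval_P : MvPolynomial.aeval ![t, q] P = (lkGram t q n).det := by
    rw [← AlgHom.coe_toRingHom, RingHom.map_det, map_lkGram]
    simp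
  have eval_P : MvPolynomial.eval ![2, 1] P = 3 ^ Fintype.card (BP n) := by
    rw [RingHom.map_det, map_lkGram]
    simp only [MvPolynomial.eval_X, cons_val_zero, cons_val_one]
    rw [lkGram_one, det_smul, det_one, mul_one]
    norm_num
  rw [← aeval_P]
  refine (map_ne_zero_iff _ htq).2 fun hP => ?_
  rw [hP, map_zero] at eval_P
  exact pow_ne_zero _ three_ne_zero eval_P.symm

theorem algebraicIndependent_int_of_rat {A ι : Type*} [CommRing A] [Algebra ℚ A] {x : ι → A}
    (hx : AlgebraicIndependent ℚ x) : AlgebraicIndependent ℤ x :=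
  hx.restrictScalars Int.cast_injective

theorem algebraicIndependent_tt_qq : AlgebraicIndependent ℚ ![tt, qq] := by
  convert (MvPolynomial.algebraicIndependent_X (Fin 2) ℚ).map'
    (f := IsScalarTower.toAlgHom ℚ (MvPolynomial (Fin 2) ℚ) F2)
    (IsFractionRing.injective (MvPolynomial (Fin 2) ℚ) F2) using 1
  ext i
  fin_cases i <;> rfl

end Nonsingular

theorem lk_reverse_transpose_general {R : Type*} [CommRing R] {t q : R}
    (htq : AlgebraicIndependent ℤ ![t, q]) (n : ℕ) (K : Braid n →* GL (BP n) R)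
    (hK : ∀ m : Fin (n - 1), (K (σg m) : Matrix (BP n) (BP n) R) = LKgen t q n ((m : ℕ) + 1))
    (rev : Braid n →* (Braid n)ᵐᵒᵖ)
    (hrev : ∀ i : Fin (n - 1), rev (σg i) = MulOpposite.op (σg i)) :
    ∃ V : Matrix (BP n) (BP n) R,
      (∀ r c, V r c ∈ Subring.closure {t, q}) ∧
      V.det ≠ 0 ∧
      ∀ β : Braid n,
        (K (rev β).unop : Matrix (BP n) (BP n) R) * V =
          V * (K β : Matrix (BP n) (BP n) R)ᵀ := by
  refine ⟨lkGram t q n, fun r c => ?_, det_lkGram_ne_zero htq n, ?_⟩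
  · exact lkGram_apply_mem (Subring.subset_closure (by simp)) (Subring.subset_closure (by simp)) r c
  · refine map_rev_mul_eq_mul_transpose (PresentedGroup.closure_range_of _) rev
      (Set.forall_mem_range.2 hrev) ((Units.coeHom _).comp K) (Set.forall_mem_range.2 fun i => ?_)
    have h := LKgen_mul_lkGram_eq_mul_transpose t q (n := n) (m := ⟨i + 1, by omega⟩)
      (Nat.succ_pos i)
    rwa [← hK i] at h

/-- There is a non-singular matrix `V` over `ℤ[t^{±1}, q^{±1}]` such that
`K(β^rev) V = V K(β)ᵀ` for every braid `β`, where `β ↦ β^rev` is the anti-automorphism of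
the braid group fixing each Artin generator (encoded as a homomorphism into the opposite
group sending each generator `σ_i` to `op σ_i`). -/
theorem lk_reverse_transpose (n : ℕ) (K : Braid n →* GL (BP n) F2)
    (hK : ∀ m : Fin (n - 1),
      (K (σg m) : Matrix (BP n) (BP n) F2) = LKgen tt qq n ((m : ℕ) + 1))
    (rev : Braid n →* (Braid n)ᵐᵒᵖ)
    (hrev : ∀ i : Fin (n - 1), rev (σg i) = MulOpposite.op (σg i)) :
    ∃ V : Matrix (BP n) (BP n) F2,
      (∀ r c, V r c ∈ Subring.closure {tt, tt⁻¹, qq, qq⁻¹}) ∧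
      V.det ≠ 0 ∧
      ∀ β : Braid n,
        (K (rev β).unop : Matrix (BP n) (BP n) F2) * V =
          V * (K β : Matrix (BP n) (BP n) F2)ᵀ := by
  obtain ⟨V, hV, h⟩ := lk_reverse_transpose_general
    (algebraicIndependent_int_of_rat algebraicIndependent_tt_qq) n K hK rev hrev
  exact ⟨V, fun r c => Subring.closure_mono (by grind) (hV r c), h⟩
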